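/- Let Y₁ < Y₂ be real numbers and assume: (i) for every y ∈ (Y₁, Y₂), 𝖴(y)·𝖴₁(y) > 0 and 𝖵(y)·𝖵₁(y) < 0; (ii) (𝖴·𝖴₁·𝖵·𝖵₁)(Y₁) = 0 and (𝖴·𝖴₁·𝖵·𝖵₁)(Y₂) = 0; (iii) g(Y₁) > 0 and g(Y₂) < 0; (iv) h(y) < 0 for every y ∈ [Y₁, Y₂]. Define φ̃(y) as the argument (in [0, π]) of the complex number g(y) + 2·√(−𝖴(y)·𝖴₁(y)·𝖵(y)·𝖵₁(y))·i. Then φ̃ is continuous and strictly increasing on [Y₁, Y₂], φ̃(Y₁) = 0, φ̃(Y₂) = π, and φ̃ maps [Y₁, Y₂] bijectively onto [0, π]. -/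

import Mathlib

/-!
The matrix with entries `U, V, U1, V1` is a transfer matrix of the Airy equation. As the Wronskian
`u v' - u' v` is constantly `1` (`airy_wronskian`), it has determinant `U V₁ - V U₁ = 1`, so that
`g ^ 2 - 4 U U₁ V V₁ = (U V₁ + V U₁) ^ 2 - 4 U V₁ V U₁ = 1`.
Thus `g + 2 √(-U U₁ V V₁) i` lies on the upper unit semicircle and its argument is `arccos g`.
The Airy equation gives `g' = 2 h < 0`, and the conditions at the endpoints force `g Y₁ = 1` and
`g Y₂ = -1`. Hence `g` decreases strictly from `1` to `-1`, and `arccos ∘ g` increases strictly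
from `0` to `π`.
-/

lemma airy_wronskian {u v u' v' : ℝ → ℝ}
    (hu : ∀ x, HasDerivAt u (u' x) x) (hu' : ∀ x, HasDerivAt u' (x * u x) x)
    (hv : ∀ x, HasDerivAt v (v' x) x) (hv' : ∀ x, HasDerivAt v' (x * v x) x)
    (hu0 : u 0 = 1) (hu'0 : u' 0 = 0) (hv'0 : v' 0 = 1) (x : ℝ) :
    u x * v' x - u' x * v x = 1 := by
  have hd : ∀ x, HasDerivAt (fun x => u x * v' x - u' x * v x) 0 x := fun x => by
    refine (((hu x).mul (hv' x)).sub ((hu' x).mul (hv x))).congr_deriv ?_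
    ring
  have := is_const_of_deriv_eq_zero (fun x => (hd x).differentiableAt) (fun x => (hd x).deriv) x 0
  simpa [hu0, hu'0, hv'0] using this

/-- On the unit circle with `√(1 - g²) = 2√P`, the argument is the arccosine of the real part. -/
lemma arg_eq_arccos {g P : ℝ} (h1 : -1 ≤ g) (h2 : g ≤ 1) (hP : g ^ 2 + 4 * P = 1) :
    Complex.arg ((g : ℂ) + (2 * Real.sqrt P : ℝ) * Complex.I) = Real.arccos g := by
  have hs : Real.sin (Real.arccos g) = 2 * Real.sqrt P := by
    rw [Real.sin_arccos, show 1 - g ^ 2 = 2 ^ 2 * P by linarith,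
      Real.sqrt_mul (by norm_num), Real.sqrt_sq (by norm_num)]
  have hmem : Real.arccos g ∈ Set.Ioc (-Real.pi) Real.pi :=
    ⟨by linarith [Real.arccos_nonneg g, Real.pi_pos], Real.arccos_le_pi g⟩
  have := Complex.arg_cos_add_sin_mul_I hmem
  rwa [← Complex.ofReal_cos, ← Complex.ofReal_sin, Real.cos_arccos h1 h2, hs] at this

/-- Odd-band case of Proposition 2.2: the argument function φ̃ is a strictly
    increasing homeomorphism from the spectral band [Y₁, Y₂] onto [0, π]. -/
theorem arg_strictMono_odd_band
    (u v u' v' : ℝ → ℝ)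
    (hu : ∀ x, HasDerivAt u (u' x) x)
    (hu' : ∀ x, HasDerivAt u' (x * u x) x)
    (hv : ∀ x, HasDerivAt v (v' x) x)
    (hv' : ∀ x, HasDerivAt v' (x * v x) x)
    (hu0 : u 0 = 1) (hu'0 : u' 0 = 0) (hv0 : v 0 = 0) (hv'0 : v' 0 = 1)
    (c : ℝ) (hc : 0 < c)
    (U U1 V V1 : ℝ → ℝ)
    (hU : ∀ y, U y = v' y * u (y + c) - u' y * v (y + c))
    (hU1 : ∀ y, U1 y = v' y * u' (y + c) - u' y * v' (y + c))
    (hV : ∀ y, V y = u y * v (y + c) - v y * u (y + c))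
    (hV1 : ∀ y, V1 y = u y * v' (y + c) - v y * u' (y + c))
    (g h : ℝ → ℝ)
    (hg : ∀ y, g y = U y * V1 y + V y * U1 y)
    (hh : ∀ y, h y = -(U y * U1 y) - y * (V y * V1 y) + U1 y * V1 y
        + (y + c) * (U y * V y))
    (Y₁ Y₂ : ℝ) (hY : Y₁ < Y₂)
    (hsigns : ∀ y ∈ Set.Ioo Y₁ Y₂, 0 < U y * U1 y ∧ V y * V1 y < 0)
    (hzero₁ : U Y₁ * U1 Y₁ * V Y₁ * V1 Y₁ = 0)
    (hzero₂ : U Y₂ * U1 Y₂ * V Y₂ * V1 Y₂ = 0)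
    (hg₁ : 0 < g Y₁) (hg₂ : g Y₂ < 0)
    (hhneg : ∀ y ∈ Set.Icc Y₁ Y₂, h y < 0)
    (φt : ℝ → ℝ)
    (hφt : ∀ y, φt y = Complex.arg
      ((g y : ℂ) + (2 * Real.sqrt (-(U y * U1 y * V y * V1 y)) : ℝ) * Complex.I)) :
    ContinuousOn φt (Set.Icc Y₁ Y₂) ∧
    StrictMonoOn φt (Set.Icc Y₁ Y₂) ∧
    φt Y₁ = 0 ∧
    φt Y₂ = Real.pi ∧
    Set.BijOn φt (Set.Icc Y₁ Y₂) (Set.Icc 0 Real.pi) := by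
  have hW := airy_wronskian hu hu' hv hv' hu0 hu'0 hv'0
  have hdet : ∀ y, U y * V1 y - V y * U1 y = 1 := fun y => by
    rw [hU, hV1, hV, hU1]
    linear_combination (u (y + c) * v' (y + c) - u' (y + c) * v (y + c)) * hW y + hW (y + c)
  have hcirc : ∀ y, g y ^ 2 + 4 * (-(U y * U1 y * V y * V1 y)) = 1 := fun y => by
    rw [hg]
    linear_combination (U y * V1 y - V y * U1 y + 1) * hdet y
  -- The transfer matrix inherits a first-order linear system from the Airy equation.
  have dU : ∀ y, HasDerivAt U (-(y * V y) + U1 y) y := fun y => by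
    rw [funext hU]
    refine (((hv' y).mul ((hu (y + c)).comp_add_const y c)).sub
      ((hu' y).mul ((hv (y + c)).comp_add_const y c))).congr_deriv ?_
    rw [hV, hU1]; ring
  have dU1 : ∀ y, HasDerivAt U1 (-(y * V1 y) + (y + c) * U y) y := fun y => by
    rw [funext hU1]
    refine (((hv' y).mul ((hu' (y + c)).comp_add_const y c)).sub
      ((hu' y).mul ((hv' (y + c)).comp_add_const y c))).congr_deriv ?_
    rw [hV1, hU]; ring
  have dV : ∀ y, HasDerivAt V (-U y + V1 y) y := fun y => by
    rw [funext hV]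
    refine (((hu y).mul ((hv (y + c)).comp_add_const y c)).sub
      ((hv y).mul ((hu (y + c)).comp_add_const y c))).congr_deriv ?_
    rw [hU, hV1]; ring
  have dV1 : ∀ y, HasDerivAt V1 (-U1 y + (y + c) * V y) y := fun y => by
    rw [funext hV1]
    refine (((hu y).mul ((hv' (y + c)).comp_add_const y c)).sub
      ((hv y).mul ((hu' (y + c)).comp_add_const y c))).congr_deriv ?_
    rw [hU1, hV]; ring
  have dg : ∀ y, HasDerivAt g (2 * h y) y := fun y => by
    rw [funext hg]
    refine (((dU y).mul (dV1 y)).add ((dV y).mul (dU1 y))).congr_deriv ?_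
    rw [hh]; ring
  have hgcont : Continuous g := continuous_iff_continuousAt.2 fun y => (dg y).continuousAt
  have hanti : StrictAntiOn g (Set.Icc Y₁ Y₂) := by
    refine strictAntiOn_of_deriv_neg (convex_Icc _ _) hgcont.continuousOn fun y hy => ?_
    rw [(dg y).deriv]
    linarith [hhneg y (interior_subset hy)]
  have hgY₁ : g Y₁ = 1 := by
    have := hcirc Y₁
    rw [hzero₁] at this
    nlinarith
  have hgY₂ : g Y₂ = -1 := by
    have := hcirc Y₂
    rw [hzero₂] at this
    nlinarith
  have hL : Y₁ ∈ Set.Icc Y₁ Y₂ := Set.left_mem_Icc.2 hY.le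
  have hR : Y₂ ∈ Set.Icc Y₁ Y₂ := Set.right_mem_Icc.2 hY.le
  have hmaps : Set.MapsTo g (Set.Icc Y₁ Y₂) (Set.Icc (-1) 1) := fun y hy =>
    ⟨hgY₂ ▸ hanti.antitoneOn hy hR hy.2, hgY₁ ▸ hanti.antitoneOn hL hy hy.1⟩
  have hφ : Set.EqOn (Real.arccos ∘ g) φt (Set.Icc Y₁ Y₂) := fun y hy => by
    rw [hφt, arg_eq_arccos (hmaps hy).1 (hmaps hy).2 (hcirc y), Function.comp_apply]
  have hcont : ContinuousOn φt (Set.Icc Y₁ Y₂) :=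
    (Real.continuous_arccos.comp hgcont).continuousOn.congr hφ.symm
  have hmono : StrictMonoOn φt (Set.Icc Y₁ Y₂) :=
    (Real.strictAntiOn_arccos.comp hanti hmaps).congr hφ
  have h₁ : φt Y₁ = 0 := by rw [← hφ hL, Function.comp_apply, hgY₁, Real.arccos_one]
  have h₂ : φt Y₂ = Real.pi := by rw [← hφ hR, Function.comp_apply, hgY₂, Real.arccos_neg_one]
  refine ⟨hcont, hmono, h₁, h₂, ?_, hmono.injOn, ?_⟩
  · intro y hy
    rw [← hφ hy]
    exact ⟨Real.arccos_nonneg _, Real.arccos_le_pi _⟩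
  · have := intermediate_value_Icc hY.le hcont
    rwa [h₁, h₂] at this
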